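/- Let p, q ∈ ℂ and μ ∈ ℂ with Re μ > 0. Assume θ[p,q](iν) ≠ 0 and ∂qθ[p,q](iν) ≠ 0 for every ν with Re ν > 0. Then ã₂[p,q](iμ+1) = ã₂[p,q+p+1/2](iμ), and if moreover w₁[−q,p](iμ), w₂[−q,p](iμ), w₃[−q,p](iμ) and F[−q,p](iμ) are all nonzero, then ã₂[p,q](i/μ) = −μ² ã₂[−q,p](iμ). -/

import Mathlib

noncomputable section

/-- The theta function with characteristics `θ[p,q](iμ)`. -/
def theta (p q μ : ℂ) : ℂ :=
  ∑' m : ℤ, Complex.exp (-(Real.pi : ℂ) * ((m : ℂ) + p) ^ 2 * μ +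
    2 * (Real.pi : ℂ) * Complex.I * ((m : ℂ) + p) * q)

/-- The characteristic derivative `∂qθ[p,q](iμ)`. -/
def thetaQ (p q μ : ℂ) : ℂ :=
  2 * (Real.pi : ℂ) * Complex.I *
    ∑' m : ℤ, ((m : ℂ) + p) * Complex.exp (-(Real.pi : ℂ) * ((m : ℂ) + p) ^ 2 * μ +
      2 * (Real.pi : ℂ) * Complex.I * ((m : ℂ) + p) * q)

/-- The n-th μ-derivative `∂μⁿθ[p,q](iμ)`, given by its absolutely convergent series. -/
def thetaD (n : ℕ) (p q μ : ℂ) : ℂ :=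
  (-(Real.pi : ℂ)) ^ n *
    ∑' m : ℤ, ((m : ℂ) + p) ^ (2 * n) *
      Complex.exp (-(Real.pi : ℂ) * ((m : ℂ) + p) ^ 2 * μ +
        2 * (Real.pi : ℂ) * Complex.I * ((m : ℂ) + p) * q)

/-- The n-th μ-derivative `∂μⁿ∂qθ[p,q](iμ)`, given by its absolutely convergent series. -/
def thetaQD (n : ℕ) (p q μ : ℂ) : ℂ :=
  2 * Complex.I * (-1 : ℂ) ^ n * (Real.pi : ℂ) ^ (n + 1) *
    ∑' m : ℤ, ((m : ℂ) + p) ^ (2 * n + 1) *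
      Complex.exp (-(Real.pi : ℂ) * ((m : ℂ) + p) ^ 2 * μ +
        2 * (Real.pi : ℂ) * Complex.I * ((m : ℂ) + p) * q)

/-- The constant `C(j|n) = (−i)ⁿ n! / (2ʲ (n−2j)! (2j)!!)` with `(2j)!! = 2ʲ j!`. -/
def Ccoef (j n : ℕ) : ℂ :=
  (-Complex.I) ^ n * (n.factorial : ℂ) /
    ((2 : ℂ) ^ j * ((n - 2 * j).factorial : ℂ) * ((2 : ℂ) ^ j * (j.factorial : ℂ)))

/-- `w₁[p,q](iμ)` of the two-parametric family. -/
def w1 (p q μ : ℂ) : ℂ :=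
  -(Complex.I / 2) * theta 0 0 μ * theta 0 (1 / 2) μ * thetaQ p (q + 1 / 2) μ /
    (Complex.exp ((Real.pi : ℂ) * Complex.I * p) * theta p q μ)

/-- `w₂[p,q](iμ)` of the two-parametric family. -/
def w2 (p q μ : ℂ) : ℂ :=
  (Complex.I / 2) * theta (1 / 2) 0 μ * theta 0 (1 / 2) μ *
    thetaQ (p + 1 / 2) (q + 1 / 2) μ /
    (Complex.exp ((Real.pi : ℂ) * Complex.I * p) * theta p q μ)

/-- `w₃[p,q](iμ)` of the two-parametric family. -/
def w3 (p q μ : ℂ) : ℂ :=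
  -(1 / 2 : ℂ) * theta (1 / 2) 0 μ * theta 0 0 μ * thetaQ (p + 1 / 2) q μ / theta p q μ

/-- The conformal factor `F[p,q](iμ)` of the two-parametric family. -/
def Ftwo (Λ p q μ : ℂ) : ℂ :=
  (2 / ((Real.pi : ℂ) * Λ)) * (theta p q μ / thetaQ p q μ) ^ 2

/-- `w₁[q₀](iμ)` of the one-parametric family. -/
def v1 (q0 μ : ℂ) : ℂ := 1 / (μ + q0) + 2 * thetaD 1 (1 / 2) 0 μ / theta (1 / 2) 0 μ

/-- `w₂[q₀](iμ)` of the one-parametric family. -/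
def v2 (q0 μ : ℂ) : ℂ := 1 / (μ + q0) + 2 * thetaD 1 0 0 μ / theta 0 0 μ

/-- `w₃[q₀](iμ)` of the one-parametric family. -/
def v3 (q0 μ : ℂ) : ℂ := 1 / (μ + q0) + 2 * thetaD 1 0 (1 / 2) μ / theta 0 (1 / 2) μ

/-- The conformal factor `F[q₀](iμ) = C(μ+q₀)²` of the one-parametric family. -/
def Fone (C q0 μ : ℂ) : ℂ := C * (μ + q0) ^ 2

/-- The Seeley–de Witt coefficient `ã₀[p,q](iμ)` of the two-parametric family. -/
def a0two (Λ p q μ : ℂ) : ℂ :=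
  4 * Ftwo Λ p q μ ^ 2 * w1 p q μ * w2 p q μ * w3 p q μ

/-- The Seeley–de Witt coefficient `ã₀[q₀](iμ)` of the one-parametric family. -/
def a0one (C q0 μ : ℂ) : ℂ :=
  4 * Fone C q0 μ ^ 2 * v1 q0 μ * v2 q0 μ * v3 q0 μ

/-- The Seeley–de Witt coefficient `ã₂[p,q](iμ)` of the two-parametric family. -/
def a2two (Λ p q μ : ℂ) : ℂ :=
  -(Ftwo Λ p q μ / 3) * (w1 p q μ ^ 2 + w2 p q μ ^ 2 + w3 p q μ ^ 2) +
  (Ftwo Λ p q μ / 6) *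
    ((w1 p q μ ^ 2 * w2 p q μ ^ 2 - deriv (w3 p q) μ ^ 2) / w3 p q μ ^ 2 +
     (w1 p q μ ^ 2 * w3 p q μ ^ 2 - deriv (w2 p q) μ ^ 2) / w2 p q μ ^ 2 +
     (w2 p q μ ^ 2 * w3 p q μ ^ 2 - deriv (w1 p q) μ ^ 2) / w1 p q μ ^ 2) -
  (Ftwo Λ p q μ / 3) *
    (deriv (w1 p q) μ * deriv (w2 p q) μ / (w1 p q μ * w2 p q μ) +
     deriv (w1 p q) μ * deriv (w3 p q) μ / (w1 p q μ * w3 p q μ) +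
     deriv (w2 p q) μ * deriv (w3 p q) μ / (w2 p q μ * w3 p q μ)) +
  (Ftwo Λ p q μ / 3) *
    (iteratedDeriv 2 (w1 p q) μ / w1 p q μ + iteratedDeriv 2 (w2 p q) μ / w2 p q μ +
     iteratedDeriv 2 (w3 p q) μ / w3 p q μ) -
  deriv (Ftwo Λ p q) μ ^ 2 / (2 * Ftwo Λ p q μ) + iteratedDeriv 2 (Ftwo Λ p q) μ

/-!
Both generators of the modular group act on the theta functions with characteristics by an
automorphy factor and a change of characteristics. In the quotients defining `wⱼ` and `F` these
factors almost cancel: the translation `μ ↦ μ - i` exchanges `w₂` and `w₃` and fixes `w₁` and `F`,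
while the inversion `μ ↦ 1/μ` exchanges `w₁` and `w₃` up to sign, each `wⱼ` having weight `2`, and
`F` has weight `-2` up to sign.

The coefficient `ã₂` is symmetric in the `wⱼ`, even in each of them and odd in `F`, which settles
the translation and the signs. For weights `(2, 2, 2, -2)` the correction terms produced by
differentiating the automorphy factors cancel, so that `ã₂` has weight `2`.
-/

section Inversion

open scoped Topology

variable {𝕜 : Type*} [NontriviallyNormedField 𝕜]

/-- The weight-`k` action `x ↦ x⁻ᵏ f(x⁻¹)` of the inversion on functions. In the coordinate
`μ = -iτ` it is the modular slash action of `τ ↦ -1/τ`, up to a constant. -/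
def invSlash (k : ℤ) (f : 𝕜 → 𝕜) (x : 𝕜) : 𝕜 :=
  x ^ (-k) * f x⁻¹

lemma hasDerivAt_invSlash (k : ℤ) {f : 𝕜 → 𝕜} {x : 𝕜} (hx : x ≠ 0)
    (hf : DifferentiableAt 𝕜 f x⁻¹) :
    HasDerivAt (invSlash k f)
      (-k * invSlash (k + 1) f x - invSlash (k + 2) (deriv f) x) x := by
  have hcomp : HasDerivAt (fun y ↦ f y⁻¹) (deriv f x⁻¹ * -(x ^ 2)⁻¹) x :=
    hf.hasDerivAt.comp x (hasDerivAt_inv hx)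
  refine ((hasDerivAt_zpow (-k) x (.inl hx)).mul hcomp).congr_deriv ?_
  simp only [invSlash, neg_add, zpow_add₀ hx, zpow_sub₀ hx, zpow_neg, zpow_ofNat]
  push_cast
  ring

variable [CompleteSpace 𝕜]

lemma iteratedDeriv_two_invSlash (k : ℤ) {f : 𝕜 → 𝕜} {x : 𝕜} (hx : x ≠ 0)
    (hf : AnalyticAt 𝕜 f x⁻¹) :
    iteratedDeriv 2 (invSlash k f) x =
      k * (k + 1) * invSlash (k + 2) f x + 2 * (k + 1) * invSlash (k + 3) (deriv f) x +
        invSlash (k + 4) (iteratedDeriv 2 f) x := by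
  have hderiv : deriv (invSlash k f) =ᶠ[𝓝 x]
      fun y ↦ -k * invSlash (k + 1) f y - invSlash (k + 2) (deriv f) y := by
    filter_upwards [eventually_ne_nhds hx,
      (continuousAt_inv₀ hx).eventually hf.eventually_analyticAt] with y hy hfy
    exact (hasDerivAt_invSlash k hy hfy.differentiableAt).deriv
  have hf₁ := hasDerivAt_invSlash (k + 1) hx hf.differentiableAt
  have hf₂ := hasDerivAt_invSlash (k + 2) hx hf.deriv.differentiableAt
  rw [iteratedDeriv_succ, iteratedDeriv_one, hderiv.deriv_eq,
    ((hf₁.const_mul (-k : 𝕜)).fun_sub hf₂).deriv, iteratedDeriv_succ, iteratedDeriv_one]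
  simp only [add_assoc, Int.reduceAdd]
  push_cast
  ring

end Inversion

section SeeleyDeWitt

open scoped Topology

variable {𝕜 : Type*} [NontriviallyNormedField 𝕜]

/-- The second Seeley–de Witt coefficient as a functional of arbitrary functions `w₁`, `w₂`, `w₃`
and conformal factor `F`. -/
def seeleyDeWitt₂ (w₁ w₂ w₃ F : 𝕜 → 𝕜) (x : 𝕜) : 𝕜 :=
  -(F x / 3) * (w₁ x ^ 2 + w₂ x ^ 2 + w₃ x ^ 2) +
  (F x / 6) *
    ((w₁ x ^ 2 * w₂ x ^ 2 - deriv w₃ x ^ 2) / w₃ x ^ 2 +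
     (w₁ x ^ 2 * w₃ x ^ 2 - deriv w₂ x ^ 2) / w₂ x ^ 2 +
     (w₂ x ^ 2 * w₃ x ^ 2 - deriv w₁ x ^ 2) / w₁ x ^ 2) -
  (F x / 3) *
    (deriv w₁ x * deriv w₂ x / (w₁ x * w₂ x) + deriv w₁ x * deriv w₃ x / (w₁ x * w₃ x) +
     deriv w₂ x * deriv w₃ x / (w₂ x * w₃ x)) +
  (F x / 3) *
    (iteratedDeriv 2 w₁ x / w₁ x + iteratedDeriv 2 w₂ x / w₂ x + iteratedDeriv 2 w₃ x / w₃ x) -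
  deriv F x ^ 2 / (2 * F x) + iteratedDeriv 2 F x

variable (w₁ w₂ w₃ F : 𝕜 → 𝕜) (x : 𝕜)

lemma seeleyDeWitt₂_swap_right : seeleyDeWitt₂ w₁ w₃ w₂ F x = seeleyDeWitt₂ w₁ w₂ w₃ F x := by
  unfold seeleyDeWitt₂
  ring

lemma seeleyDeWitt₂_swap_outer : seeleyDeWitt₂ w₃ w₂ w₁ F x = seeleyDeWitt₂ w₁ w₂ w₃ F x := by
  unfold seeleyDeWitt₂
  ring

lemma seeleyDeWitt₂_neg_right : seeleyDeWitt₂ w₁ w₂ (-w₃) F x = seeleyDeWitt₂ w₁ w₂ w₃ F x := by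
  simp only [seeleyDeWitt₂, Pi.neg_apply, deriv.neg, iteratedDeriv_neg]
  ring

lemma seeleyDeWitt₂_neg_conformalFactor :
    seeleyDeWitt₂ w₁ w₂ w₃ (-F) x = -seeleyDeWitt₂ w₁ w₂ w₃ F x := by
  simp only [seeleyDeWitt₂, Pi.neg_apply, deriv.neg, iteratedDeriv_neg, mul_neg, div_neg]
  ring

lemma seeleyDeWitt₂_comp_sub_const (a : 𝕜) :
    seeleyDeWitt₂ (fun y ↦ w₁ (y - a)) (fun y ↦ w₂ (y - a)) (fun y ↦ w₃ (y - a))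
      (fun y ↦ F (y - a)) x = seeleyDeWitt₂ w₁ w₂ w₃ F (x - a) := by
  simp only [seeleyDeWitt₂, deriv_comp_sub_const, iteratedDeriv_comp_sub_const]

variable {w₁ w₂ w₃ F x}

lemma seeleyDeWitt₂_congr {v₁ v₂ v₃ G : 𝕜 → 𝕜} (h₁ : w₁ =ᶠ[𝓝 x] v₁) (h₂ : w₂ =ᶠ[𝓝 x] v₂)
    (h₃ : w₃ =ᶠ[𝓝 x] v₃) (hF : F =ᶠ[𝓝 x] G) :
    seeleyDeWitt₂ w₁ w₂ w₃ F x = seeleyDeWitt₂ v₁ v₂ v₃ G x := by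
  simp only [seeleyDeWitt₂, h₁.eq_of_nhds, h₂.eq_of_nhds, h₃.eq_of_nhds, hF.eq_of_nhds,
    h₁.deriv_eq, h₂.deriv_eq, h₃.deriv_eq, hF.deriv_eq, h₁.iteratedDeriv_eq 2,
    h₂.iteratedDeriv_eq 2, h₃.iteratedDeriv_eq 2, hF.iteratedDeriv_eq 2]

lemma seeleyDeWitt₂_invSlash [CompleteSpace 𝕜] [CharZero 𝕜] (hx : x ≠ 0)
    (hw₁ : AnalyticAt 𝕜 w₁ x) (hw₂ : AnalyticAt 𝕜 w₂ x) (hw₃ : AnalyticAt 𝕜 w₃ x)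
    (hF : AnalyticAt 𝕜 F x) (hw₁0 : w₁ x ≠ 0) (hw₂0 : w₂ x ≠ 0) (hw₃0 : w₃ x ≠ 0)
    (hF0 : F x ≠ 0) :
    seeleyDeWitt₂ (invSlash 2 w₁) (invSlash 2 w₂) (invSlash 2 w₃) (invSlash (-2) F) x⁻¹ =
      x ^ 2 * seeleyDeWitt₂ w₁ w₂ w₃ F x := by
  have hderiv (k : ℤ) {f : 𝕜 → 𝕜} (hf : AnalyticAt 𝕜 f x) :
      deriv (invSlash k f) x⁻¹ =
        -k * invSlash (k + 1) f x⁻¹ - invSlash (k + 2) (deriv f) x⁻¹ :=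
    (hasDerivAt_invSlash k (inv_ne_zero hx) (by simpa using hf.differentiableAt)).deriv
  have hderiv₂ (k : ℤ) {f : 𝕜 → 𝕜} (hf : AnalyticAt 𝕜 f x) :=
    iteratedDeriv_two_invSlash k (inv_ne_zero hx) (f := f) (by simpa using hf)
  simp only [seeleyDeWitt₂, hderiv _ hw₁, hderiv _ hw₂, hderiv _ hw₃, hderiv _ hF,
    hderiv₂ _ hw₁, hderiv₂ _ hw₂, hderiv₂ _ hw₃, hderiv₂ _ hF]
  simp only [invSlash, inv_inv, zpow_neg, zpow_ofNat, Int.reduceAdd, Int.reduceNeg, neg_neg]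
  push_cast
  field_simp
  ring

end SeeleyDeWitt

section ThetaFunctions

open Complex
open scoped Real

/-- The moment `∑ₘ (m + p)ⁿ exp(−π(m+p)²μ + 2πi(m+p)q)`, which puts `theta` (`n = 0`) and
`thetaQ` (`n = 1`) on the same footing. -/
def thetaMoment (n : ℕ) (p q μ : ℂ) : ℂ :=
  ∑' m : ℤ, ((m : ℂ) + p) ^ n *
    cexp (-(π : ℂ) * ((m : ℂ) + p) ^ 2 * μ + 2 * (π : ℂ) * I * ((m : ℂ) + p) * q)

lemma theta_eq_thetaMoment (p q μ : ℂ) : theta p q μ = thetaMoment 0 p q μ := by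
  simp only [theta, thetaMoment, pow_zero, one_mul]

lemma thetaQ_eq_thetaMoment (p q μ : ℂ) : thetaQ p q μ = 2 * π * I * thetaMoment 1 p q μ := by
  simp only [thetaQ, thetaMoment, pow_one]

lemma thetaMoment_add_one_left (n : ℕ) (p q μ : ℂ) :
    thetaMoment n (p + 1) q μ = thetaMoment n p q μ := by
  refine (tsum_congr fun m ↦ ?_).trans (Equiv.tsum_eq (Equiv.addRight (1 : ℤ)) _)
  simp only [Equiv.coe_addRight, Int.cast_add, Int.cast_one, add_right_comm, ← add_assoc]

lemma thetaMoment_add_one_right (n : ℕ) (p q μ : ℂ) :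
    thetaMoment n p (q + 1) μ = cexp (2 * π * I * p) * thetaMoment n p q μ := by
  rw [thetaMoment, thetaMoment, ← tsum_mul_left]
  refine tsum_congr fun m ↦ ?_
  rw [mul_left_comm, ← exp_add]
  congr 1
  exact exp_eq_exp_iff_exists_int.mpr ⟨m, by ring⟩

lemma thetaMoment_sub_I (n : ℕ) (p q μ : ℂ) :
    thetaMoment n p q (μ - I) =
      cexp (-π * I * (p * (p + 1))) * thetaMoment n p (q + p + 1 / 2) μ := by
  rw [thetaMoment, thetaMoment, ← tsum_mul_left]
  refine tsum_congr fun m ↦ ?_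
  rw [mul_left_comm, ← exp_add]
  congr 1
  -- The exponents differ by `πi(m² - m)`, and `m² - m` is even.
  obtain ⟨k, hk⟩ := Int.even_mul_pred_self m
  have hk' : (m : ℂ) * (m - 1) = k + k := mod_cast hk
  refine exp_eq_exp_iff_exists_int.mpr ⟨k, ?_⟩
  linear_combination π * I * hk'

lemma theta_add_one_left (p q μ : ℂ) : theta (p + 1) q μ = theta p q μ := by
  simp only [theta_eq_thetaMoment, thetaMoment_add_one_left]

lemma theta_add_one_right (p q μ : ℂ) :
    theta p (q + 1) μ = cexp (2 * π * I * p) * theta p q μ := by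
  simp only [theta_eq_thetaMoment, thetaMoment_add_one_right]

lemma theta_sub_I (p q μ : ℂ) :
    theta p q (μ - I) = cexp (-π * I * (p * (p + 1))) * theta p (q + p + 1 / 2) μ := by
  simp only [theta_eq_thetaMoment, thetaMoment_sub_I]

lemma thetaQ_add_one_left (p q μ : ℂ) : thetaQ (p + 1) q μ = thetaQ p q μ := by
  simp only [thetaQ_eq_thetaMoment, thetaMoment_add_one_left]

lemma thetaQ_add_one_right (p q μ : ℂ) :
    thetaQ p (q + 1) μ = cexp (2 * π * I * p) * thetaQ p q μ := by
  simp only [thetaQ_eq_thetaMoment, thetaMoment_add_one_right, mul_left_comm]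

lemma thetaQ_sub_I (p q μ : ℂ) :
    thetaQ p q (μ - I) = cexp (-π * I * (p * (p + 1))) * thetaQ p (q + p + 1 / 2) μ := by
  simp only [thetaQ_eq_thetaMoment, thetaMoment_sub_I, mul_left_comm]

/-- The factor `exp(−πp²μ + 2πipq)` relating `θ[p,q]` to the Jacobi theta function at
`z = q + pτ`, `τ = iμ`. -/
def charFactor (p q μ : ℂ) : ℂ :=
  cexp (-(π : ℂ) * p ^ 2 * μ + 2 * (π : ℂ) * I * p * q)

lemma charFactor_mul_jacobiTheta₂_term (m : ℤ) (p q μ : ℂ) :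
    charFactor p q μ * jacobiTheta₂_term m (q + p * (I * μ)) (I * μ) =
      cexp (-(π : ℂ) * ((m : ℂ) + p) ^ 2 * μ + 2 * (π : ℂ) * I * ((m : ℂ) + p) * q) := by
  rw [charFactor, jacobiTheta₂_term, ← exp_add]
  congr 1
  linear_combination (2 * π * m * p * μ + π * m ^ 2 * μ) * I_sq

lemma theta_eq_jacobiTheta₂ (p q μ : ℂ) :
    theta p q μ = charFactor p q μ * jacobiTheta₂ (q + p * (I * μ)) (I * μ) := by
  rw [theta, jacobiTheta₂, ← tsum_mul_left]
  exact tsum_congr fun m ↦ (charFactor_mul_jacobiTheta₂_term m p q μ).symm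

lemma thetaQ_eq_jacobiTheta₂ (p q : ℂ) {μ : ℂ} (hμ : 0 < μ.re) :
    thetaQ p q μ = charFactor p q μ *
      (2 * π * I * p * jacobiTheta₂ (q + p * (I * μ)) (I * μ) +
        jacobiTheta₂' (q + p * (I * μ)) (I * μ)) := by
  have hτ : 0 < (I * μ).im := by simpa using hμ
  have hsum := (((hasSum_jacobiTheta₂_term (q + p * (I * μ)) hτ).mul_left (2 * π * I * p)).add
    (hasSum_jacobiTheta₂'_term (q + p * (I * μ)) hτ)).mul_left (charFactor p q μ)
  rw [thetaQ, ← hsum.tsum_eq, ← tsum_mul_left]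
  refine tsum_congr fun m ↦ ?_
  rw [← charFactor_mul_jacobiTheta₂_term, jacobiTheta₂'_term]
  ring

lemma charFactor_mul_exp_neg_sq_div (p q : ℂ) {x : ℂ} (hx : x ≠ 0) :
    charFactor p q x * cexp (-π * I * (q + p * (I * x)) ^ 2 / (I * x)) =
      cexp (2 * π * I * p * q) * charFactor (-q) p x⁻¹ := by
  rw [charFactor, charFactor, ← exp_add, ← exp_add]
  congr 1
  field_simp
  linear_combination -p ^ 2 * x ^ 2 * I_sq

-- The arguments of Mathlib's functional equation for `jacobiTheta₂` at `z = q + pτ`, `τ = ix`.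
lemma functional_equation_arguments (p q : ℂ) {x : ℂ} (hx : x ≠ 0) :
    -I * (I * x) = x ∧ (q + p * (I * x)) / (I * x) = p + -q * (I * x⁻¹) ∧
      -1 / (I * x) = I * x⁻¹ := by
  refine ⟨by linear_combination -x * I_sq, ?_, ?_⟩ <;> field_simp
  · linear_combination q * I_sq
  · linear_combination -I_sq

lemma theta_eq_theta_inv (p q : ℂ) {x : ℂ} (hx : x ≠ 0) :
    theta p q x =
      1 / x ^ (1 / 2 : ℂ) * cexp (2 * π * I * p * q) * theta (-q) p x⁻¹ := by
  obtain ⟨hroot, hz, hτ⟩ := functional_equation_arguments p q hx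
  rw [theta_eq_jacobiTheta₂, theta_eq_jacobiTheta₂, jacobiTheta₂_functional_equation, hroot, hz, hτ]
  linear_combination (1 / x ^ (1 / 2 : ℂ) * jacobiTheta₂ (p + -q * (I * x⁻¹)) (I * x⁻¹)) *
    charFactor_mul_exp_neg_sq_div p q hx

lemma inv_re_pos {x : ℂ} (hx : 0 < x.re) : 0 < (x⁻¹).re := by
  rw [inv_re]
  exact div_pos hx (normSq_pos.mpr (ne_zero_of_re_pos hx))

lemma thetaQ_eq_thetaQ_inv (p q : ℂ) {x : ℂ} (hx : 0 < x.re) :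
    thetaQ p q x = 1 / x ^ (1 / 2 : ℂ) * cexp (2 * π * I * p * q) *
      (-I * x⁻¹ * thetaQ (-q) p x⁻¹) := by
  have hx0 : x ≠ 0 := ne_zero_of_re_pos hx
  obtain ⟨hroot, hz, hτ⟩ := functional_equation_arguments p q hx0
  rw [thetaQ_eq_jacobiTheta₂ p q hx, thetaQ_eq_jacobiTheta₂ _ _ (inv_re_pos hx),
    jacobiTheta₂_functional_equation, jacobiTheta₂'_functional_equation, hroot, hz, hτ]
  generalize jacobiTheta₂ (p + -q * (I * x⁻¹)) (I * x⁻¹) = ϑ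
  generalize jacobiTheta₂' (p + -q * (I * x⁻¹)) (I * x⁻¹) = ϑ'
  have hcancel : x⁻¹ * x = 1 := inv_mul_cancel₀ hx0
  have hchar := charFactor_mul_exp_neg_sq_div p q hx0
  generalize cexp (-π * I * (q + p * (I * x)) ^ 2 / (I * x)) = E at hchar ⊢
  rw [div_eq_mul_inv _ (I * x), mul_inv, inv_I]
  linear_combination (1 / x ^ (1 / 2 : ℂ) * (-I * x⁻¹) * (2 * π * I * -q * ϑ + ϑ')) * hchar +
    (2 * π * I * p * charFactor p q x * (1 / x ^ (1 / 2 : ℂ)) * E * ϑ) *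
      (I ^ 2 * hcancel + I_sq)

lemma differentiableAt_jacobiTheta₂'_comp {z τ : ℂ → ℂ} (hz : Differentiable ℂ z)
    (hτ : Differentiable ℂ τ) {x : ℂ} (hx : 0 < (τ x).im) :
    DifferentiableAt ℂ (fun y ↦ jacobiTheta₂' (z y) (τ y)) x := by
  obtain ⟨T, hT, hTx⟩ := exists_between hx
  obtain ⟨S, hSx⟩ := exists_gt |(z x).im|
  have hzc := hz.continuous
  have hτc := hτ.continuous
  have hV : IsOpen ({y | |(z y).im| < S} ∩ {y | T < (τ y).im}) :=
    (isOpen_lt (by fun_prop) continuous_const).inter (isOpen_lt continuous_const (by fun_prop))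
  have hbound := (summable_pow_mul_jacobiTheta₂_term_bound S hT 1).mul_left (2 * π)
  simp only [pow_one, ← mul_assoc] at hbound
  refine (differentiableOn_tsum_of_summable_norm hbound (fun n ↦ ?_) hV
    fun n y hy ↦ ?_).differentiableAt (hV.mem_nhds ⟨hSx, hTx⟩)
  · unfold jacobiTheta₂'_term jacobiTheta₂_term
    fun_prop
  · exact mod_cast norm_jacobiTheta₂'_term_le hT hy.1.le hy.2.le n

lemma differentiableAt_jacobiTheta₂_comp {z τ : ℂ → ℂ} {x : ℂ} (hz : DifferentiableAt ℂ z x)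
    (hτ : DifferentiableAt ℂ τ x) (hx : 0 < (τ x).im) :
    DifferentiableAt ℂ (fun y ↦ jacobiTheta₂ (z y) (τ y)) x :=
  DifferentiableAt.comp (g := fun p : ℂ × ℂ ↦ jacobiTheta₂ p.1 p.2) (f := fun y ↦ (z y, τ y)) x
    (hasFDerivAt_jacobiTheta₂ (z x) hx).differentiableAt (hz.prodMk hτ)

lemma differentiableAt_charFactor (p q μ : ℂ) : DifferentiableAt ℂ (charFactor p q) μ := by
  unfold charFactor
  fun_prop

lemma analyticAt_theta (p q : ℂ) {μ : ℂ} (hμ : 0 < μ.re) : AnalyticAt ℂ (theta p q) μ := by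
  have hdiff : DifferentiableOn ℂ (theta p q) {ν | 0 < ν.re} := by
    intro ν hν
    have hτ : 0 < (I * ν).im := by simpa using hν
    rw [funext (theta_eq_jacobiTheta₂ p q)]
    exact ((differentiableAt_charFactor p q ν).mul (differentiableAt_jacobiTheta₂_comp
      (by fun_prop) (by fun_prop) hτ)).differentiableWithinAt
  exact hdiff.analyticAt ((isOpen_re_gt 0).mem_nhds hμ)

lemma analyticAt_thetaQ (p q : ℂ) {μ : ℂ} (hμ : 0 < μ.re) : AnalyticAt ℂ (thetaQ p q) μ := by
  have hdiff : DifferentiableOn ℂ (thetaQ p q) {ν | 0 < ν.re} := by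
    refine DifferentiableOn.congr (fun ν hν ↦ ?_) fun ν hν ↦ thetaQ_eq_jacobiTheta₂ p q hν
    have hτ : 0 < (I * ν).im := by simpa using hν
    have hϑ := differentiableAt_jacobiTheta₂_comp (z := fun y ↦ q + p * (I * y))
      (τ := fun y ↦ I * y) (by fun_prop) (by fun_prop) hτ
    have hϑ' := differentiableAt_jacobiTheta₂'_comp (z := fun y ↦ q + p * (I * y))
      (τ := fun y ↦ I * y) (by fun_prop) (by fun_prop) hτ
    exact ((differentiableAt_charFactor p q ν).mul
      ((hϑ.const_mul _).add hϑ')).differentiableWithinAt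
  exact hdiff.analyticAt ((isOpen_re_gt 0).mem_nhds hμ)

end ThetaFunctions

section ModularBehavior

open Complex
open scoped Real Topology

local notation "θ₂" => theta (1 / 2) 0
local notation "θ₃" => theta 0 0
local notation "θ₄" => theta 0 (1 / 2)

/-- The ratio `∂qθ[p+a,q+b] / θ[p,q]`, for `a`, `b` half-periods. The functions `wⱼ[p,q]` and
`F[p,q]` are built from these ratios and the theta constants. -/
def thetaRatio (a b p q μ : ℂ) : ℂ :=
  thetaQ (p + a) (q + b) μ / theta p q μ

lemma thetaRatio_add_one_left (a b p q μ : ℂ) :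
    thetaRatio (a + 1) b p q μ = thetaRatio a b p q μ := by
  rw [thetaRatio, ← add_assoc, thetaQ_add_one_left, thetaRatio]

lemma thetaRatio_add_one_right (a b p q μ : ℂ) :
    thetaRatio a (b + 1) p q μ = cexp (2 * π * I * (p + a)) * thetaRatio a b p q μ := by
  rw [thetaRatio, ← add_assoc, thetaQ_add_one_right, thetaRatio, mul_div_assoc]

lemma thetaRatio_sub_I (a b p q μ : ℂ) :
    thetaRatio a b p q (μ - I) =
      cexp (-π * I * (a * (2 * p + a + 1))) * thetaRatio a (a + b) p (q + p + 1 / 2) μ := by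
  rw [thetaRatio, thetaQ_sub_I, theta_sub_I, mul_div_mul_comm, ← exp_sub, thetaRatio]
  ring_nf

lemma thetaRatio_eq_thetaRatio_inv (a b p q : ℂ) {x : ℂ} (hx : 0 < x.re) :
    thetaRatio a b p q x =
      -I * x⁻¹ * cexp (2 * π * I * (p * b + q * a + a * b)) * thetaRatio (-b) a (-q) p x⁻¹ := by
  have hx0 : x ≠ 0 := ne_zero_of_re_pos hx
  have hroot : 1 / x ^ (1 / 2 : ℂ) ≠ 0 := by simp [hx0]
  have hphase : 2 * π * I * (p + a) * (q + b) =
      2 * π * I * p * q + 2 * π * I * (p * b + q * a + a * b) := by ring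
  rw [thetaRatio, thetaRatio, thetaQ_eq_thetaQ_inv _ _ hx, theta_eq_theta_inv _ _ hx0, hphase,
    exp_add, neg_add]
  generalize 1 / x ^ (1 / 2 : ℂ) = root at hroot ⊢
  field_simp

lemma analyticAt_thetaRatio (a b : ℂ) {p q μ : ℂ} (hμ : 0 < μ.re) (hθ : theta p q μ ≠ 0) :
    AnalyticAt ℂ (thetaRatio a b p q) μ :=
  (analyticAt_thetaQ _ _ hμ).div (analyticAt_theta _ _ hμ) hθ

lemma w1_eq_thetaRatio (p q μ : ℂ) :
    w1 p q μ = -(I / 2) * (θ₃ μ * θ₄ μ) * cexp (-(π * I * p)) * thetaRatio 0 (1 / 2) p q μ := by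
  rw [w1, thetaRatio, exp_neg, add_zero]
  field_simp

lemma w2_eq_thetaRatio (p q μ : ℂ) :
    w2 p q μ =
      I / 2 * (θ₂ μ * θ₄ μ) * cexp (-(π * I * p)) * thetaRatio (1 / 2) (1 / 2) p q μ := by
  rw [w2, thetaRatio, exp_neg]
  field_simp

lemma w3_eq_thetaRatio (p q μ : ℂ) :
    w3 p q μ = -(1 / 2) * (θ₂ μ * θ₃ μ) * thetaRatio (1 / 2) 0 p q μ := by
  rw [w3, thetaRatio, add_zero]
  ring

lemma Ftwo_eq_thetaRatio (Λ p q μ : ℂ) :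
    Ftwo Λ p q μ = 2 / (π * Λ) * (thetaRatio 0 0 p q μ)⁻¹ ^ 2 := by
  rw [Ftwo, thetaRatio, inv_div, add_zero, add_zero]

lemma theta₂_sub_I (μ : ℂ) : θ₂ (μ - I) = cexp (π * I * (1 / 4)) * θ₂ μ := by
  have hchar : (0 : ℂ) + 1 / 2 + 1 / 2 = 0 + 1 := by norm_num
  rw [theta_sub_I, hchar, theta_add_one_right, ← mul_assoc, ← exp_add]
  ring_nf

lemma theta₃_sub_I (μ : ℂ) : θ₃ (μ - I) = θ₄ μ := by
  simp only [theta_sub_I, zero_mul, mul_zero, exp_zero, one_mul, add_zero, zero_add]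

lemma theta₄_sub_I (μ : ℂ) : θ₄ (μ - I) = θ₃ μ := by
  have hchar : (1 : ℂ) / 2 + 0 + 1 / 2 = 0 + 1 := by norm_num
  rw [theta_sub_I, hchar, theta_add_one_right]
  simp only [zero_mul, mul_zero, exp_zero, one_mul]

lemma theta₂_eq_inv {x : ℂ} (hx : x ≠ 0) : θ₂ x = 1 / x ^ (1 / 2 : ℂ) * θ₄ x⁻¹ := by
  simpa using theta_eq_theta_inv (1 / 2) 0 hx

lemma theta₃_eq_inv {x : ℂ} (hx : x ≠ 0) : θ₃ x = 1 / x ^ (1 / 2 : ℂ) * θ₃ x⁻¹ := by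
  simpa using theta_eq_theta_inv 0 0 hx

lemma theta₄_eq_inv {x : ℂ} (hx : x ≠ 0) : θ₄ x = 1 / x ^ (1 / 2 : ℂ) * θ₂ x⁻¹ := by
  have hchar : -(1 / 2 : ℂ) + 1 = 1 / 2 := by norm_num
  rw [theta_eq_theta_inv _ _ hx, ← theta_add_one_left (-(1 / 2)), hchar]
  simp only [mul_zero, zero_mul, exp_zero, mul_one]

lemma one_div_cpow_half_mul_self (x : ℂ) :
    1 / x ^ (1 / 2 : ℂ) * (1 / x ^ (1 / 2 : ℂ)) = x⁻¹ := by
  rw [one_div, ← mul_inv, ← pow_two, one_div, ← Nat.cast_ofNat (n := 2),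
    cpow_nat_inv_pow _ (by norm_num)]

lemma theta₃_mul_theta₄_eq_inv {x : ℂ} (hx : x ≠ 0) :
    θ₃ x * θ₄ x = x⁻¹ * (θ₂ x⁻¹ * θ₃ x⁻¹) := by
  rw [theta₃_eq_inv hx, theta₄_eq_inv hx, mul_mul_mul_comm, one_div_cpow_half_mul_self,
    mul_comm (θ₃ x⁻¹)]

lemma theta₂_mul_theta₄_eq_inv {x : ℂ} (hx : x ≠ 0) :
    θ₂ x * θ₄ x = x⁻¹ * (θ₂ x⁻¹ * θ₄ x⁻¹) := by
  rw [theta₂_eq_inv hx, theta₄_eq_inv hx, mul_mul_mul_comm, one_div_cpow_half_mul_self,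
    mul_comm (θ₄ x⁻¹)]

lemma theta₂_mul_theta₃_eq_inv {x : ℂ} (hx : x ≠ 0) :
    θ₂ x * θ₃ x = x⁻¹ * (θ₃ x⁻¹ * θ₄ x⁻¹) := by
  rw [theta₂_eq_inv hx, theta₃_eq_inv hx, mul_mul_mul_comm, one_div_cpow_half_mul_self,
    mul_comm (θ₄ x⁻¹)]

lemma exp_pi_mul_I_half : cexp (π * I * (1 / 2)) = I := by
  rw [show π * I * (1 / 2) = π / 2 * I by ring, exp_pi_div_two_mul_I]

lemma w1_sub_I (p q μ : ℂ) : w1 p q (μ - I) = w1 p (q + p + 1 / 2) μ := by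
  rw [w1_eq_thetaRatio, w1_eq_thetaRatio, theta₃_sub_I, theta₄_sub_I, thetaRatio_sub_I, zero_add]
  simp only [zero_mul, mul_zero, exp_zero, one_mul, mul_comm (θ₄ μ)]

lemma w2_sub_I (p q μ : ℂ) : w2 p q (μ - I) = w3 p (q + p + 1 / 2) μ := by
  have hshift : (1 / 2 : ℂ) + 1 / 2 = 0 + 1 := by norm_num
  have hphase : cexp (π * I * (1 / 4)) * cexp (-(π * I * p)) *
      cexp (-π * I * (1 / 2 * (2 * p + 1 / 2 + 1))) * cexp (2 * π * I * (p + 1 / 2)) = I := by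
    rw [← exp_add, ← exp_add, ← exp_add]
    exact (congrArg cexp (by ring)).trans exp_pi_mul_I_half
  rw [w2_eq_thetaRatio, w3_eq_thetaRatio, theta₂_sub_I, theta₄_sub_I, thetaRatio_sub_I, hshift,
    thetaRatio_add_one_right]
  linear_combination (I / 2 * θ₂ μ * θ₃ μ * thetaRatio (1 / 2) 0 p (q + p + 1 / 2) μ) * hphase +
    1 / 2 * θ₂ μ * θ₃ μ * thetaRatio (1 / 2) 0 p (q + p + 1 / 2) μ * I_sq

lemma w3_sub_I (p q μ : ℂ) : w3 p q (μ - I) = w2 p (q + p + 1 / 2) μ := by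
  have hphase : cexp (π * I * (1 / 4)) * cexp (-π * I * (1 / 2 * (2 * p + 1 / 2 + 1))) * I =
      cexp (-(π * I * p)) := by
    nth_rw 3 [← exp_pi_mul_I_half]
    rw [← exp_add, ← exp_add]
    ring_nf
  rw [w3_eq_thetaRatio, w2_eq_thetaRatio, theta₂_sub_I, theta₃_sub_I, thetaRatio_sub_I, add_zero,
    ← hphase]
  linear_combination (-(1 / 2) * cexp (π * I * (1 / 4)) *
    cexp (-π * I * (1 / 2 * (2 * p + 1 / 2 + 1))) * θ₂ μ * θ₄ μ *
      thetaRatio (1 / 2) (1 / 2) p (q + p + 1 / 2) μ) * I_sq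

lemma Ftwo_sub_I (Λ p q μ : ℂ) : Ftwo Λ p q (μ - I) = Ftwo Λ p (q + p + 1 / 2) μ := by
  rw [Ftwo_eq_thetaRatio, Ftwo_eq_thetaRatio, thetaRatio_sub_I]
  simp only [zero_mul, mul_zero, exp_zero, one_mul, add_zero]

lemma thetaRatio_neg_half_left (b p q μ : ℂ) :
    thetaRatio (-(1 / 2)) b p q μ = thetaRatio (1 / 2) b p q μ := by
  rw [← thetaRatio_add_one_left, show -(1 / 2 : ℂ) + 1 = 1 / 2 by norm_num]

lemma w1_eq_invSlash (p q : ℂ) {x : ℂ} (hx : 0 < x.re) :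
    w1 p q x = invSlash 2 (w3 (-q) p) x := by
  have hphase : cexp (-(π * I * p)) *
      cexp (2 * π * I * (p * (1 / 2) + q * 0 + 0 * (1 / 2))) = 1 := by
    rw [← exp_add]
    exact (congrArg cexp (by ring)).trans exp_zero
  rw [w1_eq_thetaRatio, theta₃_mul_theta₄_eq_inv (ne_zero_of_re_pos hx),
    thetaRatio_eq_thetaRatio_inv _ _ _ _ hx, thetaRatio_neg_half_left, invSlash, w3_eq_thetaRatio,
    zpow_neg, zpow_ofNat]
  linear_combination (x⁻¹ ^ 2 * (θ₂ x⁻¹ * θ₃ x⁻¹) * thetaRatio (1 / 2) 0 (-q) p x⁻¹ / 2) *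
    (I ^ 2 * hphase + I_sq)

lemma w2_eq_invSlash (p q : ℂ) {x : ℂ} (hx : 0 < x.re) :
    w2 p q x = invSlash 2 (w2 (-q) p) x := by
  have hphase : cexp (-(π * I * p)) *
      cexp (2 * π * I * (p * (1 / 2) + q * (1 / 2) + 1 / 2 * (1 / 2))) =
        cexp (-(π * I * -q)) * I := by
    calc
      _ = cexp (-(π * I * -q)) * cexp (π * I * (1 / 2)) := by
        rw [← exp_add, ← exp_add]
        ring_nf
      _ = _ := by rw [exp_pi_mul_I_half]
  rw [w2_eq_thetaRatio, theta₂_mul_theta₄_eq_inv (ne_zero_of_re_pos hx),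
    thetaRatio_eq_thetaRatio_inv _ _ _ _ hx, thetaRatio_neg_half_left, invSlash, w2_eq_thetaRatio,
    zpow_neg, zpow_ofNat]
  linear_combination
    -(x⁻¹ ^ 2 * (θ₂ x⁻¹ * θ₄ x⁻¹) * thetaRatio (1 / 2) (1 / 2) (-q) p x⁻¹ / 2) *
      (I ^ 2 * hphase + I * cexp (-(π * I * -q)) * I_sq)

lemma w3_eq_invSlash (p q : ℂ) {x : ℂ} (hx : 0 < x.re) :
    w3 p q x = -invSlash 2 (w1 (-q) p) x := by
  have hphase : 2 * π * I * (p * 0 + q * (1 / 2) + 1 / 2 * 0) = -(π * I * -q) := by ring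
  rw [w3_eq_thetaRatio, theta₂_mul_theta₃_eq_inv (ne_zero_of_re_pos hx),
    thetaRatio_eq_thetaRatio_inv _ _ _ _ hx, neg_zero, hphase, invSlash, w1_eq_thetaRatio,
    zpow_neg, zpow_ofNat]
  ring

lemma Ftwo_eq_invSlash (Λ p q : ℂ) {x : ℂ} (hx : 0 < x.re) :
    Ftwo Λ p q x = -invSlash (-2) (Ftwo Λ (-q) p) x := by
  rw [Ftwo_eq_thetaRatio, thetaRatio_eq_thetaRatio_inv _ _ _ _ hx, invSlash, Ftwo_eq_thetaRatio,
    neg_neg, zpow_ofNat]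
  simp only [mul_zero, add_zero, exp_zero, mul_one, neg_zero, mul_inv, inv_inv, mul_pow, inv_neg,
    inv_I, neg_neg, I_sq]
  ring

lemma Ftwo_ne_zero {Λ p q μ : ℂ} (hΛ : Λ ≠ 0) (hθ : theta p q μ ≠ 0) (hθq : thetaQ p q μ ≠ 0) :
    Ftwo Λ p q μ ≠ 0 :=
  mul_ne_zero (div_ne_zero two_ne_zero (mul_ne_zero (ofReal_ne_zero.mpr Real.pi_ne_zero) hΛ))
    (pow_ne_zero 2 (div_ne_zero hθ hθq))

lemma theta_ne_zero_and_thetaQ_ne_zero_of_Ftwo_ne_zero {Λ p q μ : ℂ} (hF : Ftwo Λ p q μ ≠ 0) :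
    theta p q μ ≠ 0 ∧ thetaQ p q μ ≠ 0 :=
  div_ne_zero_iff.mp (ne_zero_pow two_ne_zero (right_ne_zero_of_mul hF))

lemma analyticAt_w1 {p q μ : ℂ} (hμ : 0 < μ.re) (hθ : theta p q μ ≠ 0) :
    AnalyticAt ℂ (w1 p q) μ := by
  rw [funext (w1_eq_thetaRatio p q)]
  exact ((analyticAt_const.mul ((analyticAt_theta _ _ hμ).mul (analyticAt_theta _ _ hμ))).mul
    analyticAt_const).mul (analyticAt_thetaRatio _ _ hμ hθ)

lemma analyticAt_w2 {p q μ : ℂ} (hμ : 0 < μ.re) (hθ : theta p q μ ≠ 0) :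
    AnalyticAt ℂ (w2 p q) μ := by
  rw [funext (w2_eq_thetaRatio p q)]
  exact ((analyticAt_const.mul ((analyticAt_theta _ _ hμ).mul (analyticAt_theta _ _ hμ))).mul
    analyticAt_const).mul (analyticAt_thetaRatio _ _ hμ hθ)

lemma analyticAt_w3 {p q μ : ℂ} (hμ : 0 < μ.re) (hθ : theta p q μ ≠ 0) :
    AnalyticAt ℂ (w3 p q) μ := by
  rw [funext (w3_eq_thetaRatio p q)]
  exact (analyticAt_const.mul ((analyticAt_theta _ _ hμ).mul (analyticAt_theta _ _ hμ))).mul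
    (analyticAt_thetaRatio _ _ hμ hθ)

lemma analyticAt_Ftwo (Λ : ℂ) {p q μ : ℂ} (hμ : 0 < μ.re) (hθq : thetaQ p q μ ≠ 0) :
    AnalyticAt ℂ (Ftwo Λ p q) μ :=
  analyticAt_const.mul (((analyticAt_theta p q hμ).div (analyticAt_thetaQ p q hμ) hθq).pow 2)

lemma a2two_eq_seeleyDeWitt₂ (Λ p q μ : ℂ) :
    a2two Λ p q μ = seeleyDeWitt₂ (w1 p q) (w2 p q) (w3 p q) (Ftwo Λ p q) μ :=
  rfl

lemma a2two_sub_I (Λ p q μ : ℂ) : a2two Λ p q (μ - I) = a2two Λ p (q + p + 1 / 2) μ := by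
  rw [a2two_eq_seeleyDeWitt₂, ← seeleyDeWitt₂_comp_sub_const]
  simp only [w1_sub_I, w2_sub_I, w3_sub_I, Ftwo_sub_I]
  exact seeleyDeWitt₂_swap_right ..

lemma a2two_inv {Λ p q μ : ℂ} (hμ : 0 < μ.re) (hw₁ : w1 (-q) p μ ≠ 0) (hw₂ : w2 (-q) p μ ≠ 0)
    (hw₃ : w3 (-q) p μ ≠ 0) (hF : Ftwo Λ (-q) p μ ≠ 0) :
    a2two Λ p q μ⁻¹ = -μ ^ 2 * a2two Λ (-q) p μ := by
  obtain ⟨hθ, hθq⟩ := theta_ne_zero_and_thetaQ_ne_zero_of_Ftwo_ne_zero hF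
  have hre : ∀ᶠ x in 𝓝 μ⁻¹, 0 < x.re := (isOpen_re_gt 0).mem_nhds (inv_re_pos hμ)
  calc
    a2two Λ p q μ⁻¹ = seeleyDeWitt₂ (invSlash 2 (w3 (-q) p)) (invSlash 2 (w2 (-q) p))
        (-invSlash 2 (w1 (-q) p)) (-invSlash (-2) (Ftwo Λ (-q) p)) μ⁻¹ :=
      seeleyDeWitt₂_congr (hre.mono fun _ ↦ w1_eq_invSlash p q)
        (hre.mono fun _ ↦ w2_eq_invSlash p q) (hre.mono fun _ ↦ w3_eq_invSlash p q)
        (hre.mono fun _ ↦ Ftwo_eq_invSlash Λ p q)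
    _ = -seeleyDeWitt₂ (invSlash 2 (w1 (-q) p)) (invSlash 2 (w2 (-q) p))
        (invSlash 2 (w3 (-q) p)) (invSlash (-2) (Ftwo Λ (-q) p)) μ⁻¹ := by
      rw [seeleyDeWitt₂_neg_conformalFactor, seeleyDeWitt₂_neg_right, seeleyDeWitt₂_swap_outer]
    _ = -μ ^ 2 * a2two Λ (-q) p μ := by
      rw [seeleyDeWitt₂_invSlash (ne_zero_of_re_pos hμ) (analyticAt_w1 hμ hθ)
        (analyticAt_w2 hμ hθ) (analyticAt_w3 hμ hθ) (analyticAt_Ftwo Λ hμ hθq) hw₁ hw₂ hw₃ hF,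
        neg_mul, a2two_eq_seeleyDeWitt₂]

theorem statement17_general (Λ p q μ : ℂ) (hμ : 0 < μ.re) :
    (Ftwo Λ p q (μ - I) ≠ 0 → a2two Λ p q (μ - I) = a2two Λ p (q + p + 1 / 2) μ) ∧
    (w1 (-q) p μ ≠ 0 → w2 (-q) p μ ≠ 0 → w3 (-q) p μ ≠ 0 → Ftwo Λ (-q) p μ ≠ 0 →
      a2two Λ p q (1 / μ) = -μ ^ 2 * a2two Λ (-q) p μ) := by
  refine ⟨fun _ ↦ a2two_sub_I Λ p q μ, fun hw₁ hw₂ hw₃ hF ↦ ?_⟩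
  rw [one_div, a2two_inv hμ hw₁ hw₂ hw₃ hF]

end ModularBehavior

/-- Modular transformation properties of the Seeley–de Witt coefficient `ã₂[p,q]`
of the two-parametric family under `iμ ↦ iμ+1` and `iμ ↦ i/μ`. -/
theorem statement17 (Λ : ℂ) (hΛ : Λ ≠ 0) (p q μ : ℂ) (hμ : 0 < μ.re)
    (hθ : ∀ ν : ℂ, 0 < ν.re → theta p q ν ≠ 0)
    (hθq : ∀ ν : ℂ, 0 < ν.re → thetaQ p q ν ≠ 0) :
    a2two Λ p q (μ - Complex.I) = a2two Λ p (q + p + 1 / 2) μ ∧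
    (w1 (-q) p μ ≠ 0 → w2 (-q) p μ ≠ 0 → w3 (-q) p μ ≠ 0 → Ftwo Λ (-q) p μ ≠ 0 →
      a2two Λ p q (1 / μ) = -μ ^ 2 * a2two Λ (-q) p μ) := by
  have h := statement17_general Λ p q μ hμ
  exact ⟨h.1 (Ftwo_ne_zero hΛ (hθ _ (by simpa)) (hθq _ (by simpa))), h.2⟩

end
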